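/- The number of descents of a uniformly random involution of S_n is asymptotically normal: for every x ∈ ℝ, P( (I_n − E[I_n]) / sqrt(Var(I_n)) ≤ x ) → Φ(x) as n → ∞, where I_n is the number of descents of a uniformly random involution of S_n and Φ is the standard normal CDF. -/

import Mathlib

open Finset

/-- The number of descents of a permutation of `Fin n`:
positions `i` with `i+1 < n` and `π(i) > π(i+1)`. -/
def descents {n : ℕ} (π : Equiv.Perm (Fin n)) : ℕ :=
  (Finset.univ.filter fun i : Fin n =>
    ∃ h : (i : ℕ) + 1 < n, π ⟨(i : ℕ) + 1, h⟩ < π i).card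

/-- The involutions of the symmetric group `S_n`. -/
def involutions (n : ℕ) : Finset (Equiv.Perm (Fin n)) :=
  Finset.univ.filter fun π => π * π = 1

/-- The standard normal cumulative distribution function. -/
noncomputable def stdNormalCDF (x : ℝ) : ℝ :=
  (Real.sqrt (2 * Real.pi))⁻¹ * ∫ t in Set.Iic x, Real.exp (-(t ^ 2) / 2)

/-- Mean number of descents of a uniformly random involution of `S_n`. -/
noncomputable def invMean (n : ℕ) : ℝ :=
  (∑ π ∈ involutions n, (descents π : ℝ)) / (involutions n).card

/-- Variance of the number of descents of a uniformly random involution of `S_n`. -/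
noncomputable def invVar (n : ℕ) : ℝ :=
  (∑ π ∈ involutions n, ((descents π : ℝ) - invMean n) ^ 2) / (involutions n).card

/-- `P((I_n - E I_n)/sqrt(Var I_n) ≤ x)` under the uniform measure on involutions. -/
noncomputable def invCDF (n : ℕ) (x : ℝ) : ℝ :=
  (((involutions n).filter fun π =>
      ((descents π : ℝ) - invMean n) / Real.sqrt (invVar n) ≤ x).card : ℝ) /
    (involutions n).card

/-!
Colour the positions of an involution `π` of `S_{n+1}` with `r` colours, weakly increasingly and
strictly at its descents. Recording the pairs `(a i, a (π i))` identifies the coloured involutions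
with the swap-invariant multisets of `n + 1` pairs of colours, so
`∑ π, (r + n - des π).choose (n + 1)` counts these multisets. Double counting gives a three-term
recurrence for their number, which is thus `r ^ (n + 1) / (n + 1)!` times a polynomial `A_{n+1}` in
`1 / r`. Its coefficients of degree `0, 1, 2` give the number of involutions, the mean `n / 2`, and
the variance `(n + 2) / 12 + O(1)`.

All coefficients of `A_{n+1}` are nonnegative, and the constant one dominates. Summing the identity
against `exp (-l r)` over `r ≥ 1` and comparing with Gamma integrals therefore shows that the
moment generating function of `des π - n / 2` at `-l` is `(2 sinh (l / 2) / l) ^ (n + 2)` up to a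
factor tending to `1` as `l → 0`. The polynomial is even, so `des π` and `n - des π` have the same
law and the same holds at `l`. Hence the moment generating functions of the standardized variables
converge to that of the standard normal law, and Curtiss' theorem applies.
-/

/-! ### Multisets invariant under an involution -/

section InvariantMultisets

variable {β : Type*} [DecidableEq β]

lemma sum_count_eq_sum_filter_mem (s : Finset (Multiset β)) (x : β) :
    ∑ m ∈ s, m.count x = ∑ m ∈ s with x ∈ m, m.count x :=
  (sum_filter_of_ne fun _ _ => Multiset.count_ne_zero.1).symm

variable [Fintype β]

/-- The multisets of cardinality `n` on `β` that are mapped to themselves by `σ`. -/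
def invariantMultisets (σ : β → β) (n : ℕ) : Finset (Multiset β) :=
  {m ∈ Finset.univ.image ((↑) : Sym β n → Multiset β) | m.map σ = m}

variable {σ : β → β} {n : ℕ}

lemma mem_invariantMultisets {m : Multiset β} :
    m ∈ invariantMultisets σ n ↔ m.card = n ∧ m.map σ = m := by
  refine mem_filter.trans (and_congr_left' ?_)
  simp only [mem_image, mem_univ, true_and]
  exact ⟨fun ⟨s, hs⟩ => hs ▸ s.2, fun hm => ⟨⟨m, hm⟩, rfl⟩⟩

lemma card_invariantMultisets_zero : #(invariantMultisets σ 0) = 1 := by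
  refine card_eq_one.2 ⟨0, ?_⟩
  ext m
  rw [mem_invariantMultisets, Multiset.card_eq_zero, mem_singleton]
  exact ⟨And.left, fun hm => ⟨hm, hm ▸ Multiset.map_zero σ⟩⟩

lemma sum_count_invariantMultisets (σ : β → β) (n : ℕ) :
    ∑ x, ∑ m ∈ invariantMultisets σ n, m.count x = n * #(invariantMultisets σ n) := by
  have sum_count : ∀ m ∈ invariantMultisets σ n, ∑ x, m.count x = n := fun m hm =>
    (Multiset.sum_count_eq_card fun x _ => mem_univ x).trans (mem_invariantMultisets.1 hm).1
  rw [sum_comm, sum_congr rfl sum_count, sum_const, smul_eq_mul, mul_comm]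

lemma sum_count_add_one_of_isFixedPt (hσ : σ.Injective) {x : β} (hx : σ x = x) :
    ∑ m ∈ invariantMultisets σ (n + 1), m.count x
      = ∑ m ∈ invariantMultisets σ n, (m.count x + 1) := by
  rw [sum_count_eq_sum_filter_mem]
  refine sum_bij' (fun m _ => m.erase x) (fun m _ => x ::ₘ m) ?_ ?_ ?_ ?_ ?_
  all_goals intro m hm; simp only [mem_filter, mem_invariantMultisets] at hm ⊢
  · obtain ⟨⟨hcard, hmap⟩, hxm⟩ := hm
    exact ⟨by rw [Multiset.card_erase_of_mem hxm, hcard, Nat.pred_succ],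
      by rw [Multiset.map_erase _ hσ, hmap, hx]⟩
  · simp [hm.1, hm.2, hx]
  · exact Multiset.cons_erase hm.2
  · exact Multiset.erase_cons_head x m
  · rw [Multiset.count_erase_self, Nat.sub_add_cancel (Multiset.count_pos.2 hm.2)]

lemma sum_count_add_two_of_not_isFixedPt (hσ : σ.Involutive) {x : β} (hx : σ x ≠ x) :
    ∑ m ∈ invariantMultisets σ (n + 2), m.count x
      = ∑ m ∈ invariantMultisets σ n, (m.count x + 1) := by
  have mem_erase : ∀ m : Multiset β, m.map σ = m → x ∈ m → σ x ∈ m.erase x := fun m hmap hxm =>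
    (Multiset.mem_erase_of_ne hx).2 (hmap ▸ Multiset.mem_map_of_mem σ hxm)
  rw [sum_count_eq_sum_filter_mem]
  refine sum_bij' (fun m _ => (m.erase x).erase (σ x)) (fun m _ => x ::ₘ σ x ::ₘ m) ?_ ?_ ?_ ?_ ?_
  all_goals intro m hm; simp only [mem_filter, mem_invariantMultisets] at hm ⊢
  · obtain ⟨⟨hcard, hmap⟩, hxm⟩ := hm
    refine ⟨?_, ?_⟩
    · rw [Multiset.card_erase_of_mem (mem_erase m hmap hxm), Multiset.card_erase_of_mem hxm, hcard]
      rfl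
    · rw [Multiset.map_erase _ hσ.injective, Multiset.map_erase _ hσ.injective, hmap, hσ x,
        Multiset.erase_comm]
  · simp [hm.1, hm.2, hσ x, Multiset.cons_swap]
  · rw [Multiset.cons_erase (mem_erase m hm.1.2 hm.2), Multiset.cons_erase hm.2]
  · simp
  · rw [Multiset.count_erase_of_ne hx.symm, Multiset.count_erase_self,
      Nat.sub_add_cancel (Multiset.count_pos.2 hm.2)]

lemma sum_count_one_of_not_isFixedPt {x : β} (hx : σ x ≠ x) :
    ∑ m ∈ invariantMultisets σ 1, m.count x = 0 := by
  refine sum_eq_zero fun m hm => Multiset.count_eq_zero.2 fun hxm => hx ?_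
  obtain ⟨hcard, hmap⟩ := mem_invariantMultisets.1 hm
  obtain ⟨y, rfl⟩ := Multiset.card_eq_one.1 hcard
  rwa [Multiset.mem_singleton.1 hxm, ← Multiset.singleton_inj, ← Multiset.map_singleton]

lemma card_invariantMultisets_one (hσ : σ.Injective) :
    #(invariantMultisets σ 1) = #{x | σ x = x} := by
  have count_zero : ∀ m ∈ invariantMultisets σ 0, ∀ x, m.count x = 0 := fun m hm x => by
    rw [Multiset.card_eq_zero.1 (mem_invariantMultisets.1 hm).1, Multiset.count_zero]
  have sum_count : ∀ x, ∑ m ∈ invariantMultisets σ 1, m.count x = if σ x = x then 1 else 0 := by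
    intro x
    split_ifs with hx
    · rw [sum_count_add_one_of_isFixedPt hσ hx,
        sum_congr rfl fun m hm => by rw [count_zero m hm x], sum_const,
        card_invariantMultisets_zero]
      rfl
    · exact sum_count_one_of_not_isFixedPt hx
  rw [card_filter, ← sum_congr rfl fun x _ => sum_count x, sum_count_invariantMultisets, one_mul]

/-- Double counting of the pairs consisting of an invariant multiset and one of its elements. -/
lemma card_invariantMultisets_add_two (hσ : σ.Involutive) (n : ℕ) :
    (n + 2) * #(invariantMultisets σ (n + 2)) =
      #{x | σ x = x} * #(invariantMultisets σ (n + 1)) +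
        (Fintype.card β + n) * #(invariantMultisets σ n) := by
  have step : ∀ x, ∑ m ∈ invariantMultisets σ (n + 2), m.count x =
      (∑ m ∈ invariantMultisets σ n, m.count x + #(invariantMultisets σ n)) +
        if σ x = x then #(invariantMultisets σ (n + 1)) else 0 := by
    intro x
    have sum_succ : ∀ k, ∑ m ∈ invariantMultisets σ k, (m.count x + 1) =
        ∑ m ∈ invariantMultisets σ k, m.count x + #(invariantMultisets σ k) := fun k => by
      rw [sum_add_distrib, card_eq_sum_ones]
    split_ifs with hx
    · rw [sum_count_add_one_of_isFixedPt hσ.injective hx, sum_succ,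
        sum_count_add_one_of_isFixedPt hσ.injective hx, sum_succ]
    · rw [sum_count_add_two_of_not_isFixedPt hσ hx, sum_succ, add_zero]
  rw [← sum_count_invariantMultisets, sum_congr rfl fun x _ => step x, sum_add_distrib,
    sum_add_distrib, sum_count_invariantMultisets, ← sum_filter, sum_const, sum_const,
    smul_eq_mul, smul_eq_mul, card_univ]
  ring

end InvariantMultisets

lemma card_filter_swap_eq_self (α : Type*) [Fintype α] [DecidableEq α] :
    #{x : α × α | x.swap = x} = Fintype.card α := by
  have filter_eq : ({x : α × α | x.swap = x} : Finset (α × α)) = univ.diag := by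
    ext ⟨i, j⟩
    simp [eq_comm]
  rw [filter_eq, diag_card, card_univ]

/-! ### Involutions with a compatible colouring and symmetric multisets of pairs -/

section SortedEnumeration

variable {γ : Type*} [LinearOrder γ] {n : ℕ}

lemma monotone_eq_of_map_univ_val_eq {f g : Fin n → γ} (hf : Monotone f) (hg : Monotone g)
    (h : univ.val.map f = univ.val.map g) : f = g := by
  have perm : (List.ofFn f).Perm (List.ofFn g) := by
    rwa [← Multiset.coe_eq_coe, ← Fin.univ_val_map, ← Fin.univ_val_map]
  exact List.ofFn_injective <| perm.eq_of_pairwise'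
    (List.pairwise_ofFn.2 fun i j hij => hf hij.le) (List.pairwise_ofFn.2 fun i j hij => hg hij.le)

lemma exists_monotone_map_univ_val_eq {m : Multiset γ} (hm : m.card = n) :
    ∃ f : Fin n → γ, Monotone f ∧ univ.val.map f = m := by
  subst hm
  have length_sort := m.length_sort (r := (· ≤ ·))
  refine ⟨fun i => m.sort.get (i.cast length_sort.symm), ?_, ?_⟩
  · exact (m.pairwise_sort (· ≤ ·)).sortedLE.monotone_get.comp fun i j hij => hij
  · rw [Fin.univ_val_map]
    conv_rhs => rw [← m.sort_eq (· ≤ ·)]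
    refine congrArg _ (List.ext_get (by simp) fun k hk hk' => by simp)

end SortedEnumeration

section CompatiblePairs

lemma map_swap_map_pairs {α : Type*} {n : ℕ} {π : Equiv.Perm (Fin n)} (hπ : Function.Involutive π)
    (a : Fin n → α) :
    (univ.val.map fun i => (a i, a (π i))).map Prod.swap =
      univ.val.map fun i => (a i, a (π i)) := by
  conv_rhs => rw [← Multiset.map_univ_val_equiv π, Multiset.map_map]
  rw [Multiset.map_map]
  exact Multiset.map_congr rfl fun i _ => by simp [hπ i]

variable {α : Type*} [LinearOrder α] {n : ℕ}

lemma mem_involutions_iff {π : Equiv.Perm (Fin n)} : π ∈ involutions n ↔ Function.Involutive π := by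
  simp [involutions, Function.Involutive, Equiv.ext_iff]

/-- A colouring `a` is compatible with the permutation `π` if it increases weakly, and strictly at
the descents of `π`. -/
def IsCompatible (π : Equiv.Perm (Fin n)) (a : Fin n → α) : Prop :=
  StrictMono fun i => toLex (a i, π i)

lemma isCompatible_comp_iff_eq_sort {π : Equiv.Perm (Fin n)} {f : Fin n → α} :
    IsCompatible π (f ∘ π) ↔ π = Tuple.sort f :=
  Tuple.eq_sort_iff'.symm

lemma IsCompatible.monotone_pairs {π : Equiv.Perm (Fin n)} {a : Fin n → α}
    (h : IsCompatible π a) : Monotone fun i => toLex (a i, a (π i)) := by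
  have mono : Monotone a := fun i j hij => (Prod.Lex.toLex_le_toLex'.1 (h.monotone hij)).1
  exact fun i j hij => Prod.Lex.toLex_le_toLex'.2
    ⟨mono hij, fun heq => mono ((Prod.Lex.toLex_le_toLex'.1 (h.monotone hij)).2 heq)⟩

lemma IsCompatible.eq_sort_of_involutive {π : Equiv.Perm (Fin n)} {a : Fin n → α}
    (h : IsCompatible π a) (hπ : Function.Involutive π) : π = Tuple.sort (a ∘ π) := by
  rw [← isCompatible_comp_iff_eq_sort]
  simpa only [Function.comp_assoc, hπ.comp_self, Function.comp_id] using h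

lemma IsCompatible.inj_of_map_pairs_eq {π π' : Equiv.Perm (Fin n)} {a a' : Fin n → α}
    (h : IsCompatible π a) (h' : IsCompatible π' a') (hπ : Function.Involutive π)
    (hπ' : Function.Involutive π')
    (heq : (univ.val.map fun i => (a i, a (π i))) = univ.val.map fun i => (a' i, a' (π' i))) :
    π = π' ∧ a = a' := by
  have pairs_eq : (fun i => toLex (a i, a (π i))) = fun i => toLex (a' i, a' (π' i)) := by
    refine monotone_eq_of_map_univ_val_eq h.monotone_pairs h'.monotone_pairs ?_
    simpa only [Multiset.map_map, Function.comp_def] using congrArg (Multiset.map toLex) heq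
  have fst_eq : a = a' := funext fun i => congrArg (fun x => (ofLex x).1) (congrFun pairs_eq i)
  have snd_eq : a ∘ π = a' ∘ π' :=
    funext fun i => congrArg (fun x => (ofLex x).2) (congrFun pairs_eq i)
  exact ⟨by rw [h.eq_sort_of_involutive hπ, h'.eq_sort_of_involutive hπ', snd_eq], fst_eq⟩

section SymmetricEnumeration

variable {a b : Fin n → α}

lemma comp_sort_eq_of_map_swap_eq (hab : Monotone fun i => toLex (a i, b i))
    (hswap : (univ.val.map fun i => (b i, a i)) = univ.val.map fun i => (a i, b i)) :
    b ∘ Tuple.sort b = a ∧ a ∘ Tuple.sort b = b := by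
  set σ := Tuple.sort b with hσ
  have compatible : IsCompatible σ (b ∘ σ) := isCompatible_comp_iff_eq_sort.2 hσ
  have mono_a : Monotone a := fun i j hij => (Prod.Lex.toLex_le_toLex'.1 (hab hij)).1
  have mono_ba : Monotone fun i => toLex (b (σ i), a (σ i)) := fun i j hij =>
    have hlex := Prod.Lex.toLex_le_toLex'.1 (compatible.monotone hij)
    Prod.Lex.toLex_le_toLex'.2 ⟨hlex.1, fun heq => mono_a (hlex.2 heq)⟩
  have pairs_eq : (fun i => toLex (b (σ i), a (σ i))) = fun i => toLex (a i, b i) := by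
    refine monotone_eq_of_map_univ_val_eq mono_ba hab ?_
    calc univ.val.map (fun i => toLex (b (σ i), a (σ i)))
        = (univ.val.map σ).map (fun i => toLex (b i, a i)) := by rw [Multiset.map_map]; rfl
      _ = (univ.val.map fun i => (b i, a i)).map toLex := by
        rw [Multiset.map_univ_val_equiv, Multiset.map_map]; rfl
      _ = univ.val.map fun i => toLex (a i, b i) := by rw [hswap, Multiset.map_map]; rfl
  exact ⟨funext fun i => congrArg (fun x => (ofLex x).1) (congrFun pairs_eq i),
    funext fun i => congrArg (fun x => (ofLex x).2) (congrFun pairs_eq i)⟩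

lemma involutive_sort_of_comp_sort_eq (hab : Monotone fun i => toLex (a i, b i))
    (hba : b ∘ Tuple.sort b = a) (hab' : a ∘ Tuple.sort b = b) :
    Function.Involutive (Tuple.sort b) := by
  set σ := Tuple.sort b with hσ
  have compatible : IsCompatible σ a := hba ▸ isCompatible_comp_iff_eq_sort.2 hσ
  have a_symm : ∀ i, a (σ.symm i) = b i := fun i => by
    rw [← hba, Function.comp_apply, σ.apply_symm_apply]
  have b_comp_symm : b ∘ σ.symm = a := by
    rw [← hab', Function.comp_assoc, σ.self_comp_symm, Function.comp_id]
  have compatible_symm : IsCompatible σ.symm (b ∘ σ.symm) := by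
    rw [b_comp_symm]
    intro i j hij
    obtain ⟨ha, hb⟩ := Prod.Lex.toLex_le_toLex'.1 (hab hij.le)
    refine Prod.Lex.toLex_lt_toLex'.2 ⟨ha, fun heq => compatible.lt_iff_lt.1 ?_⟩
    rw [Prod.Lex.toLex_lt_toLex', a_symm, a_symm, σ.apply_symm_apply, σ.apply_symm_apply]
    exact ⟨hb heq, fun _ => hij⟩
  have symm_eq : σ.symm = σ := isCompatible_comp_iff_eq_sort.1 compatible_symm
  exact fun i => by rw [← congrArg (· (σ i)) symm_eq, σ.symm_apply_apply]

end SymmetricEnumeration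

open scoped Classical in
/-- The pair `(π, a)` corresponds to the symmetric multiset of the pairs `(a i, a (π i))`. -/
lemma sum_card_isCompatible_eq_card_invariantMultisets [Fintype α] :
    ∑ π ∈ involutions n, #{a : Fin n → α | IsCompatible π a} =
      #(invariantMultisets (Prod.swap : α × α → α × α) n) := by
  rw [← card_sigma]
  refine card_bij (fun p _ => univ.val.map fun i => (p.2 i, p.2 (p.1 i))) ?_ ?_ ?_
  · rintro ⟨π, a⟩ h
    simp only [mem_sigma, mem_involutions_iff] at h
    exact mem_invariantMultisets.2 ⟨by simp, map_swap_map_pairs h.1 a⟩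
  · rintro ⟨π, a⟩ h ⟨π', a'⟩ h' heq
    simp only [mem_sigma, mem_involutions_iff, mem_filter, mem_univ, true_and] at h h'
    obtain ⟨rfl, rfl⟩ := h.2.inj_of_map_pairs_eq h'.2 h.1 h'.1 heq
    rfl
  · intro m hm
    obtain ⟨hcard, hswap⟩ := mem_invariantMultisets.1 hm
    obtain ⟨p, hp, hpm⟩ := exists_monotone_map_univ_val_eq (m := m.map toLex)
      ((m.card_map _).trans hcard)
    obtain ⟨a, b, rfl⟩ : ∃ a b : Fin n → α, p = fun i => toLex (a i, b i) :=
      ⟨fun i => (ofLex (p i)).1, fun i => (ofLex (p i)).2, rfl⟩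
    have pairs_eq : (univ.val.map fun i => (a i, b i)) = m := by
      refine Multiset.map_injective toLex.injective ?_
      rw [← hpm, Multiset.map_map]; rfl
    have swap_eq : (univ.val.map fun i => (b i, a i)) = univ.val.map fun i => (a i, b i) := by
      rw [pairs_eq, ← hswap, ← pairs_eq, Multiset.map_map]; rfl
    obtain ⟨hba, hab⟩ := comp_sort_eq_of_map_swap_eq hp swap_eq
    refine ⟨⟨Tuple.sort b, a⟩, ?_, ?_⟩
    · simp only [mem_sigma, mem_involutions_iff, mem_filter, mem_univ, true_and]
      exact ⟨involutive_sort_of_comp_sort_eq hp hba hab,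
        hba ▸ isCompatible_comp_iff_eq_sort.2 rfl⟩
    · simpa only [← Function.comp_apply (f := a), hab] using pairs_eq

end CompatiblePairs

/-! ### Counting compatible colourings -/

section ShiftedColourings

variable {n : ℕ} {c : Fin (n + 1) → ℕ}

lemma le_strictMono_of_succ_le {b : Fin (n + 1) → ℕ} (hb : StrictMono b) (hc₀ : c 0 = 0)
    (hc : ∀ i : Fin n, c i.succ ≤ c i.castSucc + 1) (i : Fin (n + 1)) : c i ≤ b i := by
  induction i using Fin.induction with
  | zero => exact hc₀.trans_le (Nat.zero_le _)
  | succ i ih => exact (hc i).trans ((Nat.succ_le_succ ih).trans (hb i.castSucc_lt_succ))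

lemma strictMono_lt_add_of_succ_le {b : Fin (n + 1) → ℕ} (hb : StrictMono b)
    (hc : ∀ i : Fin n, c i.succ ≤ c i.castSucc + 1) {r : ℕ}
    (hlast : b (Fin.last n) < r + c (Fin.last n)) (i : Fin (n + 1)) : b i < r + c i := by
  induction i using Fin.reverseInduction with
  | last => exact hlast
  | cast i ih =>
    have := hc i
    have := hb i.castSucc_lt_succ
    omega

open scoped Classical in
/-- Adding `c` turns these functions into the strictly increasing maps
`Fin (n + 1) → Fin (r + c (Fin.last n))`. -/
lemma card_strictMono_add (hc₀ : c 0 = 0) (hmono : Monotone c)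
    (hc : ∀ i : Fin n, c i.succ ≤ c i.castSucc + 1) (r : ℕ) :
    #{a : Fin (n + 1) → Fin r | StrictMono fun i => (a i : ℕ) + c i} =
      (r + c (Fin.last n)).choose (n + 1) := by
  have card_orderEmb :
      Fintype.card (Fin (n + 1) ↪o Fin (r + c (Fin.last n))) =
        (r + c (Fin.last n)).choose (n + 1) := by
    rw [Fintype.card_eq_nat_card, Nat.card_congr Set.powersetCard.ofFinEmbEquiv,
      Set.powersetCard.card, Nat.card_fin]
  have val_strictMono (b : Fin (n + 1) ↪o Fin (r + c (Fin.last n))) :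
      StrictMono fun i => (b i : ℕ) := fun i j hij => b.strictMono hij
  have le_val (b : Fin (n + 1) ↪o Fin (r + c (Fin.last n))) (i : Fin (n + 1)) : c i ≤ b i :=
    le_strictMono_of_succ_le (val_strictMono b) hc₀ hc i
  have val_lt (b : Fin (n + 1) ↪o Fin (r + c (Fin.last n))) (i : Fin (n + 1)) : b i < r + c i :=
    strictMono_lt_add_of_succ_le (val_strictMono b) hc (b (Fin.last n)).2 i
  rw [← card_orderEmb, ← Fintype.card_subtype]
  exact Fintype.card_congr
    { toFun a := OrderEmbedding.ofStrictMono
        (fun i => ⟨a.1 i + c i, add_lt_add_of_lt_of_le (a.1 i).2 (hmono i.le_last)⟩)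
        fun i j hij => a.2 hij
      invFun b := ⟨fun i => ⟨b i - c i, by have := val_lt b i; have := le_val b i; omega⟩, by
        simpa only [Nat.sub_add_cancel (le_val b _)] using val_strictMono b⟩
      left_inv a := by ext i; exact Nat.add_sub_cancel _ _
      right_inv b := by ext i; exact Nat.sub_add_cancel (le_val b i) }

end ShiftedColourings

section Ascents

variable {n : ℕ} (π : Equiv.Perm (Fin (n + 1)))

/-- The number of ascents of `π` at positions before `i`. -/
def ascentsBefore (i : Fin (n + 1)) : ℕ :=
  #{j : Fin n | j.castSucc < i ∧ π j.castSucc < π j.succ}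

lemma ascentsBefore_zero : ascentsBefore π 0 = 0 := by
  simp [ascentsBefore]

lemma ascentsBefore_succ (i : Fin n) :
    ascentsBefore π i.succ =
      ascentsBefore π i.castSucc + if π i.castSucc < π i.succ then 1 else 0 := by
  have filter_succ : (univ.filter fun j : Fin n => j.castSucc < i.succ ∧ π j.castSucc < π j.succ) =
      univ.filter (fun j : Fin n => j.castSucc < i.castSucc ∧ π j.castSucc < π j.succ) ∪
        univ.filter fun j : Fin n => j = i ∧ π j.castSucc < π j.succ := by
    ext j
    simp only [mem_filter, mem_union, mem_univ, true_and, Fin.castSucc_lt_succ_iff,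
      Fin.castSucc_lt_castSucc_iff, le_iff_lt_or_eq, or_and_right]
  rw [ascentsBefore, filter_succ, card_union_of_disjoint, ascentsBefore]
  · congr 1
    split_ifs with h
    · exact card_eq_one.2 ⟨i, by ext j; simp +contextual [h]⟩
    · exact card_eq_zero.2 (by ext j; simp +contextual [h])
  · exact disjoint_filter.2 fun j _ hj hji => hj.1.ne (congrArg _ hji.1)

lemma ascentsBefore_mono : Monotone (ascentsBefore π) :=
  Fin.monotone_iff_le_succ.2 fun i => ascentsBefore_succ π i ▸ Nat.le_add_right _ _

lemma ascentsBefore_succ_le (i : Fin n) :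
    ascentsBefore π i.succ ≤ ascentsBefore π i.castSucc + 1 := by
  rw [ascentsBefore_succ]
  split_ifs <;> omega

lemma descents_eq_card_castSucc : descents π = #{j : Fin n | π j.succ < π j.castSucc} := by
  symm
  refine card_bij (fun j _ => j.castSucc) ?_ (fun _ _ _ _ h => Fin.castSucc_injective n h) ?_
  · intro j hj
    exact mem_filter.2 ⟨mem_univ _, Nat.succ_lt_succ j.2, (mem_filter.1 hj).2⟩
  · intro i hi
    obtain ⟨-, hlt, hdesc⟩ := mem_filter.1 hi
    exact ⟨⟨i, Nat.lt_of_succ_lt_succ hlt⟩, mem_filter.2 ⟨mem_univ _, hdesc⟩, rfl⟩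

lemma ascentsBefore_last_add_descents : ascentsBefore π (Fin.last n) + descents π = n := by
  have not_lt_iff (j : Fin n) : ¬ π j.castSucc < π j.succ ↔ π j.succ < π j.castSucc :=
    not_lt.trans (π.injective.ne j.castSucc_lt_succ.ne').le_iff_lt
  simp only [ascentsBefore, descents_eq_card_castSucc, Fin.castSucc_lt_last, true_and,
    ← not_lt_iff]
  rw [card_filter_add_card_filter_not, card_univ, Fintype.card_fin]

lemma descents_le : descents π ≤ n := by
  have := ascentsBefore_last_add_descents π
  omega

lemma isCompatible_iff_strictMono_add_ascentsBefore {r : ℕ} (a : Fin (n + 1) → Fin r) :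
    IsCompatible π a ↔ StrictMono fun i => (a i : ℕ) + ascentsBefore π i := by
  rw [IsCompatible, Fin.strictMono_iff_lt_succ, Fin.strictMono_iff_lt_succ]
  refine forall_congr' fun i => ?_
  rw [Prod.Lex.toLex_lt_toLex, ascentsBefore_succ]
  split_ifs with h <;> simp only [h, and_true, and_false, or_false] <;> omega

end Ascents

theorem sum_choose_descents_eq_card_invariantMultisets (r n : ℕ) :
    ∑ π ∈ involutions (n + 1), (r + n - descents π).choose (n + 1) =
      #(invariantMultisets (Prod.swap : Fin r × Fin r → Fin r × Fin r) (n + 1)) := by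
  classical
  rw [← sum_card_isCompatible_eq_card_invariantMultisets]
  refine sum_congr rfl fun π _ => ?_
  simp only [isCompatible_iff_strictMono_add_ascentsBefore]
  have hlast : r + n - descents π = r + ascentsBefore π (Fin.last n) := by
    have := ascentsBefore_last_add_descents π
    omega
  rw [hlast]
  convert (card_strictMono_add (ascentsBefore_zero π) (ascentsBefore_mono π)
    (ascentsBefore_succ_le π) r).symm

/-! ### The counting polynomial -/

section CoeffProd

open Polynomial

variable {ι R : Type*} [CommRing R] (s : Finset ι) (c : ι → R)

lemma coeff_zero_prod_one_add_C_mul_X : (∏ i ∈ s, (1 + C (c i) * X)).coeff 0 = 1 := by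
  simp [coeff_zero_prod]

lemma coeff_one_prod_one_add_C_mul_X : (∏ i ∈ s, (1 + C (c i) * X)).coeff 1 = ∑ i ∈ s, c i := by
  classical
  induction s using Finset.induction_on with
  | empty => simp [coeff_one]
  | insert i s hi ih =>
    rw [prod_insert hi, sum_insert hi, add_mul, one_mul, mul_assoc, coeff_add, coeff_C_mul,
      coeff_X_mul, coeff_zero_prod_one_add_C_mul_X, ih, mul_one, add_comm]

lemma two_mul_coeff_two_prod_one_add_C_mul_X :
    2 * (∏ i ∈ s, (1 + C (c i) * X)).coeff 2 = (∑ i ∈ s, c i) ^ 2 - ∑ i ∈ s, c i ^ 2 := by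
  classical
  induction s using Finset.induction_on with
  | empty => simp [coeff_one]
  | insert i s hi ih =>
    rw [prod_insert hi, sum_insert hi, sum_insert hi, add_mul, one_mul, mul_assoc, coeff_add,
      coeff_C_mul, coeff_X_mul, coeff_one_prod_one_add_C_mul_X, mul_add, ih]
    ring

end CoeffProd

section CountingPolynomial

open Polynomial

/-- The polynomial `A n` with `A n (1 / r) = n! * s / r ^ n`, where `s` is the number of symmetric
multisets of `n` pairs of elements of `Fin r`. -/
noncomputable def countingPoly : ℕ → ℝ[X]
  | 0 => 1
  | 1 => 1
  | n + 2 =>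
    countingPoly (n + 1) + C (n + 1 : ℝ) * (countingPoly n + C (n : ℝ) * (X ^ 2 * countingPoly n))

lemma eval_countingPoly_add_two (n : ℕ) (y : ℝ) :
    (countingPoly (n + 2)).eval y =
      (countingPoly (n + 1)).eval y + (n + 1) * ((1 + n * y ^ 2) * (countingPoly n).eval y) := by
  rw [countingPoly, eval_add, eval_C_mul, eval_add, eval_C_mul, eval_mul, eval_pow, eval_X]
  ring

lemma coeff_countingPoly_add_two (n j : ℕ) :
    (countingPoly (n + 2)).coeff (j + 2) = (countingPoly (n + 1)).coeff (j + 2) +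
      (n + 1) * ((countingPoly n).coeff (j + 2) + n * (countingPoly n).coeff j) := by
  rw [countingPoly, coeff_add, coeff_C_mul, coeff_add, coeff_C_mul, coeff_X_pow_mul]

lemma coeff_countingPoly_add_two_of_lt (n : ℕ) {j : ℕ} (hj : j < 2) :
    (countingPoly (n + 2)).coeff j =
      (countingPoly (n + 1)).coeff j + (n + 1) * (countingPoly n).coeff j := by
  rw [countingPoly, coeff_add, coeff_C_mul, coeff_add, coeff_C_mul, coeff_X_pow_mul',
    if_neg hj.not_ge, mul_zero, add_zero]

lemma eval_neg_countingPoly (n : ℕ) (y : ℝ) :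
    (countingPoly n).eval (-y) = (countingPoly n).eval y := by
  induction n using Nat.twoStepInduction with
  | zero => simp [countingPoly]
  | one => simp [countingPoly]
  | more n ih ih' => rw [eval_countingPoly_add_two, eval_countingPoly_add_two, ih, ih', neg_sq]

lemma coeff_zero_countingPoly_pos (n : ℕ) : 0 < (countingPoly n).coeff 0 := by
  induction n using Nat.twoStepInduction with
  | zero => simp [countingPoly]
  | one => simp [countingPoly]
  | more n ih ih' => rw [coeff_countingPoly_add_two_of_lt n two_pos]; positivity

lemma coeff_one_countingPoly (n : ℕ) : (countingPoly n).coeff 1 = 0 := by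
  induction n using Nat.twoStepInduction with
  | zero => simp [countingPoly, coeff_one]
  | one => simp [countingPoly, coeff_one]
  | more n ih ih' =>
    rw [coeff_countingPoly_add_two_of_lt n one_lt_two, ih, ih', mul_zero, add_zero]

lemma coeff_countingPoly_nonneg (n j : ℕ) : 0 ≤ (countingPoly n).coeff j := by
  induction n using Nat.twoStepInduction generalizing j with
  | zero => simp only [countingPoly, coeff_one]; positivity
  | one => simp only [countingPoly, coeff_one]; positivity
  | more n ih ih' =>
    match j with
    | 0 => exact (coeff_zero_countingPoly_pos _).le
    | 1 => exact (coeff_one_countingPoly _).ge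
    | j + 2 =>
      rw [coeff_countingPoly_add_two]
      have := ih j; have := ih (j + 2); have := ih' (j + 2)
      positivity

lemma descFactorial_add_mul_descFactorial_le (n k : ℕ) :
    n.descFactorial (k + 2) + 4 * n * n.descFactorial k ≤ (n + 2).descFactorial (k + 2) := by
  rw [Nat.succ_descFactorial_succ, Nat.succ_descFactorial_succ, Nat.descFactorial_succ,
    Nat.descFactorial_succ, ← mul_assoc, ← mul_assoc, ← add_mul]
  refine Nat.mul_le_mul_right _ ?_
  have le_sq : (n - (k + 1)) * (n - k) ≤ (n - 1) * n :=
    Nat.mul_le_mul (Nat.sub_le_sub_left (Nat.le_add_left 1 k) n) (Nat.sub_le n k)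
  rcases n with _ | n
  · simp at le_sq ⊢
  · rw [Nat.add_sub_cancel] at le_sq
    nlinarith

lemma coeff_countingPoly_le (n j : ℕ) :
    (countingPoly n).coeff j ≤ (countingPoly n).coeff 0 * (n.descFactorial j / 2 ^ j) := by
  induction n using Nat.twoStepInduction generalizing j with
  | zero => cases j <;> simp [countingPoly, coeff_one]
  | one =>
    rcases j with _ | j
    · simp
    · rw [countingPoly, coeff_one, if_neg j.succ_ne_zero, coeff_one_zero, one_mul]
      positivity
  | more n ih ih' =>
    match j with
    | 0 => simp
    | 1 =>
      rw [coeff_one_countingPoly]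
      exact mul_nonneg (coeff_countingPoly_nonneg _ 0) (by positivity)
    | j + 2 =>
      have hdesc : (n.descFactorial (j + 2) + 4 * n * n.descFactorial j : ℝ) ≤
          (n + 2).descFactorial (j + 2) := mod_cast descFactorial_add_mul_descFactorial_le n j
      have hdesc' : ((n + 1).descFactorial (j + 2) : ℝ) ≤ (n + 2).descFactorial (j + 2) :=
        mod_cast Nat.descFactorial_le (j + 2) (Nat.le_succ (n + 1))
      have h₀ := coeff_zero_countingPoly_pos n
      have h₁ := coeff_zero_countingPoly_pos (n + 1)
      rw [coeff_countingPoly_add_two, coeff_countingPoly_add_two_of_lt n two_pos]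
      calc _ ≤ (countingPoly (n + 1)).coeff 0 * ((n + 1).descFactorial (j + 2) / 2 ^ (j + 2)) +
            (n + 1) * ((countingPoly n).coeff 0 * (n.descFactorial (j + 2) / 2 ^ (j + 2)) +
              n * ((countingPoly n).coeff 0 * (n.descFactorial j / 2 ^ j))) := by
            gcongr
            exacts [ih' _, ih _, ih _]
        _ = ((countingPoly (n + 1)).coeff 0 * (n + 1).descFactorial (j + 2) +
            (n + 1) * (countingPoly n).coeff 0 *
              (n.descFactorial (j + 2) + 4 * n * n.descFactorial j)) / 2 ^ (j + 2) := by ring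
        _ ≤ ((countingPoly (n + 1)).coeff 0 * (n + 2).descFactorial (j + 2) +
            (n + 1) * (countingPoly n).coeff 0 * (n + 2).descFactorial (j + 2)) / 2 ^ (j + 2) := by
            gcongr
        _ = _ := by ring

lemma natDegree_countingPoly_le (n : ℕ) : (countingPoly n).natDegree ≤ n := by
  refine natDegree_le_iff_coeff_eq_zero.2 fun j hj =>
    ((coeff_countingPoly_nonneg n j).antisymm' ?_)
  simpa [Nat.descFactorial_eq_zero_iff_lt.2 hj] using coeff_countingPoly_le n j

lemma eval_countingPoly_mul_pow_eq_sum (n : ℕ) {y : ℝ} (hy : y ≠ 0) :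
    (countingPoly n).eval (1 / y) * y ^ n =
      ∑ j ∈ range (n + 1), (countingPoly n).coeff j * y ^ (n - j) := by
  rw [eval_eq_sum_range' (Nat.lt_succ_of_le (natDegree_countingPoly_le n)), sum_mul]
  refine sum_congr rfl fun j hj => ?_
  rw [pow_sub₀ y hy (mem_range_succ_iff.1 hj), one_div, inv_pow]
  ring

lemma eval_countingPoly_mul_pow_eq_card {r : ℕ} (hr : r ≠ 0) (n : ℕ) :
    (countingPoly n).eval (1 / (r : ℝ)) * r ^ n =
      n.factorial * #(invariantMultisets (Prod.swap : Fin r × Fin r → Fin r × Fin r) n) := by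
  have hr' : (r : ℝ) ≠ 0 := Nat.cast_ne_zero.2 hr
  induction n using Nat.twoStepInduction with
  | zero => simp [countingPoly, card_invariantMultisets_zero]
  | one =>
    rw [card_invariantMultisets_one Prod.swap_injective, card_filter_swap_eq_self]
    simp [countingPoly]
  | more n ih ih' =>
    have recurrence := card_invariantMultisets_add_two (σ := (Prod.swap : Fin r × Fin r → _))
      Prod.swap_swap n
    rw [card_filter_swap_eq_self, Fintype.card_prod, Fintype.card_fin] at recurrence
    replace recurrence := congrArg (Nat.cast (R := ℝ)) recurrence
    push_cast at recurrence
    rw [eval_countingPoly_add_two, Nat.factorial_succ (n + 1), Nat.factorial_succ n]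
    rw [Nat.factorial_succ] at ih'
    push_cast at ih' ⊢
    have clear_denominators : (1 + n * (1 / (r : ℝ)) ^ 2) * r ^ 2 = r ^ 2 + n := by
      field_simp
    linear_combination (r : ℝ) * ih' + (n + 1) * (r ^ 2 + n : ℝ) * ih -
      (n + 1) * n.factorial * recurrence +
      (n + 1) * (countingPoly n).eval (1 / (r : ℝ)) * r ^ n * clear_denominators

end CountingPolynomial

/-! ### Moments of the number of descents -/

section DescentPolynomial

open Polynomial

lemma factorial_mul_choose_eq_prod_mul_pow {r n d : ℕ} (hr : r ≠ 0) (hd : d ≤ n) :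
    ((n + 1).factorial * (r + n - d).choose (n + 1) : ℝ) =
      (∏ j ∈ range (n + 1), (1 + (n - d - j : ℝ) * (1 / r))) * r ^ (n + 1) := by
  have hr' : (r : ℝ) ≠ 0 := Nat.cast_ne_zero.2 hr
  rw [← Nat.cast_mul, ← Nat.descFactorial_eq_factorial_mul_choose,
    ← descPochhammer_eval_eq_descFactorial ℝ, descPochhammer_eval_eq_prod_range,
    ← card_range (n + 1), ← prod_const, card_range, ← prod_mul_distrib]
  refine prod_congr rfl fun j _ => ?_
  rw [Nat.cast_sub (hd.trans (Nat.le_add_left n r))]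
  push_cast
  field_simp
  ring

lemma factorial_mul_sum_choose_descents {r : ℕ} (hr : r ≠ 0) (n : ℕ) :
    (n + 1).factorial * ∑ π ∈ involutions (n + 1), ((r + n - descents π).choose (n + 1) : ℝ) =
      (countingPoly (n + 1)).eval (1 / (r : ℝ)) * r ^ (n + 1) := by
  rw [eval_countingPoly_mul_pow_eq_card hr, ← sum_choose_descents_eq_card_invariantMultisets]
  push_cast
  rfl

theorem sum_prod_descents_eq_countingPoly (n : ℕ) :
    ∑ π ∈ involutions (n + 1), ∏ j ∈ range (n + 1), (1 + C (n - descents π - j : ℝ) * X) =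
      countingPoly (n + 1) := by
  refine eq_of_infinite_eval_eq _ _ (Set.infinite_of_injective_forall_mem
    (f := fun r : ℕ => 1 / ((r : ℝ) + 1)) (fun r r' h => by simpa using h) fun r => ?_)
  have hr : ((r + 1 : ℕ) : ℝ) ^ (n + 1) ≠ 0 := by positivity
  rw [Set.mem_ofPred, ← Nat.cast_add_one, ← mul_left_inj' hr,
    ← factorial_mul_sum_choose_descents r.succ_ne_zero, eval_finsetSum, sum_mul, mul_sum]
  refine sum_congr rfl fun π _ => ?_
  rw [factorial_mul_choose_eq_prod_mul_pow r.succ_ne_zero (descents_le π), eval_prod]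
  simp only [eval_add, eval_one, eval_mul, eval_C, eval_X]

/-- The reversal `d ↦ n - d` of the number of descents leaves this sum unchanged because
`countingPoly (n + 1)` is even. -/
lemma factorial_mul_sum_choose_sub_descents {r : ℕ} (hr : r ≠ 0) (n : ℕ) :
    (n + 1).factorial *
        ∑ π ∈ involutions (n + 1), ((r + n - (n - descents π)).choose (n + 1) : ℝ) =
      (countingPoly (n + 1)).eval (1 / (r : ℝ)) * r ^ (n + 1) := by
  rw [← eval_neg_countingPoly, ← sum_prod_descents_eq_countingPoly, eval_finsetSum, sum_mul,
    mul_sum]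
  refine sum_congr rfl fun π _ => ?_
  rw [factorial_mul_choose_eq_prod_mul_pow hr (Nat.sub_le n _), eval_prod, ← prod_range_reflect]
  refine congrArg (· * _) (prod_congr rfl fun j hj => ?_)
  simp only [eval_add, eval_one, eval_mul, eval_C, eval_X]
  rw [Nat.cast_sub (descents_le π), Nat.add_sub_cancel, Nat.cast_sub (mem_range_succ_iff.1 hj)]
  ring

end DescentPolynomial

section Moments

lemma sum_range_sub_natCast (x : ℝ) (m : ℕ) :
    ∑ j ∈ range m, (x - j) = m * (x - (m - 1) / 2) := by
  induction m with
  | zero => simp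
  | succ m ih => rw [sum_range_succ, ih]; push_cast; ring

lemma sum_range_sub_natCast_sq (x : ℝ) (m : ℕ) :
    ∑ j ∈ range m, (x - j) ^ 2 = m * (x - (m - 1) / 2) ^ 2 + m * (m ^ 2 - 1) / 12 := by
  induction m with
  | zero => simp
  | succ m ih => rw [sum_range_succ, ih]; push_cast; ring

lemma card_involutions_eq_coeff (n : ℕ) :
    (#(involutions (n + 1)) : ℝ) = (countingPoly (n + 1)).coeff 0 := by
  simp only [← sum_prod_descents_eq_countingPoly, Polynomial.finsetSum_coeff,
    coeff_zero_prod_one_add_C_mul_X, sum_const, nsmul_eq_mul, mul_one]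

lemma card_involutions_pos (n : ℕ) : (0 : ℝ) < #(involutions (n + 1)) :=
  card_involutions_eq_coeff n ▸ coeff_zero_countingPoly_pos (n + 1)

lemma sum_descents_sub_half (n : ℕ) :
    ∑ π ∈ involutions (n + 1), (descents π - n / 2 : ℝ) = 0 := by
  have hcoeff := coeff_one_countingPoly (n + 1)
  simp only [← sum_prod_descents_eq_countingPoly, Polynomial.finsetSum_coeff,
    coeff_one_prod_one_add_C_mul_X, sum_range_sub_natCast, ← mul_sum] at hcoeff
  rw [← neg_eq_zero, ← sum_neg_distrib]
  convert (mul_eq_zero.1 hcoeff).resolve_left (by positivity) using 2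
  push_cast
  ring

theorem invMean_succ (n : ℕ) : invMean (n + 1) = n / 2 := by
  have hsum := sum_descents_sub_half n
  rw [sum_sub_distrib, sum_const, nsmul_eq_mul, sub_eq_zero] at hsum
  rw [invMean, hsum, mul_div_cancel_left₀ _ (card_involutions_pos n).ne']

lemma sum_sq_descents_sub_half (n : ℕ) :
    (n + 1) * n * ∑ π ∈ involutions (n + 1), (descents π - n / 2 : ℝ) ^ 2 =
      (n + 1) * n * (n + 2) / 12 * #(involutions (n + 1)) +
        2 * (countingPoly (n + 1)).coeff 2 := by
  rw [← sum_prod_descents_eq_countingPoly, Polynomial.finsetSum_coeff, mul_sum _ _ (2 : ℝ)]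
  simp only [two_mul_coeff_two_prod_one_add_C_mul_X, sum_range_sub_natCast,
    sum_range_sub_natCast_sq]
  rw [mul_comm _ (#(involutions (n + 1)) : ℝ), ← nsmul_eq_mul, ← sum_const, ← sum_add_distrib,
    mul_sum]
  refine sum_congr rfl fun π _ => ?_
  push_cast
  ring

lemma invVar_succ {n : ℕ} (hn : n ≠ 0) :
    invVar (n + 1) = (n + 2) / 12 +
      2 * (countingPoly (n + 1)).coeff 2 / ((n + 1) * n * (countingPoly (n + 1)).coeff 0) := by
  have hn' : (n : ℝ) ≠ 0 := Nat.cast_ne_zero.2 hn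
  have hsum := sum_sq_descents_sub_half n
  have hcard := (coeff_zero_countingPoly_pos (n + 1)).ne'
  rw [invVar, invMean_succ]
  rw [card_involutions_eq_coeff] at hsum ⊢
  set S := ∑ π ∈ involutions (n + 1), (descents π - n / 2 : ℝ) ^ 2
  field_simp
  linear_combination 12 * hsum

theorem le_invVar_succ {n : ℕ} (hn : n ≠ 0) : ((n : ℝ) + 2) / 12 ≤ invVar (n + 1) := by
  rw [invVar_succ hn, le_add_iff_nonneg_right]
  have := coeff_countingPoly_nonneg (n + 1) 2
  have := coeff_zero_countingPoly_pos (n + 1)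
  positivity

theorem invVar_succ_le {n : ℕ} (hn : n ≠ 0) : invVar (n + 1) ≤ ((n : ℝ) + 2) / 12 + 1 / 2 := by
  have hcoeff := coeff_zero_countingPoly_pos (n + 1)
  have hle := coeff_countingPoly_le (n + 1) 2
  rw [Nat.succ_descFactorial_succ, Nat.descFactorial_one] at hle
  push_cast at hle
  rw [invVar_succ hn, add_le_add_iff_left, div_le_iff₀ (by positivity)]
  linarith

end Moments

/-! ### Bounds for the Laplace transform -/

section PowMulExp

open Filter Topology MeasureTheory

variable {l : ℝ} (m : ℕ)

lemma integral_pow_mul_exp_neg_mul_Ioi (hl : 0 < l) :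
    ∫ x in Set.Ioi (0 : ℝ), x ^ m * Real.exp (-(l * x)) = m.factorial / l ^ (m + 1) := by
  have h := Real.integral_rpow_mul_exp_neg_mul_Ioi (a := (m : ℝ) + 1) (by positivity) hl
  rw [Real.Gamma_nat_eq_factorial] at h
  simp only [add_sub_cancel_right, Real.rpow_natCast] at h
  rw [h, ← Nat.cast_add_one, Real.rpow_natCast, one_div, inv_pow, mul_comm, div_eq_mul_inv]

lemma tendsto_sum_integral_pow_mul_exp_neg_mul (hl : 0 < l) :
    Tendsto (fun N : ℕ => ∑ k ∈ range N, ∫ x in (k : ℝ)..k + 1, x ^ m * Real.exp (-(l * x)))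
      atTop (𝓝 (m.factorial / l ^ (m + 1))) := by
  have hintegral := integral_pow_mul_exp_neg_mul_Ioi m hl
  have hint : IntegrableOn (fun x : ℝ => x ^ m * Real.exp (-(l * x))) (Set.Ioi 0) :=
    .of_integral_ne_zero (by rw [hintegral]; positivity)
  rw [← hintegral]
  refine (intervalIntegral_tendsto_integral_Ioi 0 hint tendsto_natCast_atTop_atTop).congr
    fun N => ?_
  have hsum := intervalIntegral.sum_integral_adjacent_intervals (μ := volume)
    (f := fun x : ℝ => x ^ m * Real.exp (-(l * x))) (a := fun k : ℕ => (k : ℝ)) (n := N)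
    (fun k _ => (by fun_prop : Continuous _).intervalIntegrable _ _)
  rw [← Nat.cast_zero, ← hsum]
  simp only [Nat.cast_add_one]

lemma summable_pow_mul_exp_neg_mul (hl : 0 < l) :
    Summable fun k : ℕ => (k : ℝ) ^ m * Real.exp (-(l * k)) := by
  refine (summable_pow_mul_geometric_of_norm_lt_one m (r := Real.exp (-l)) ?_).congr fun k => ?_
  · rwa [Real.norm_eq_abs, Real.abs_exp, Real.exp_lt_one_iff, neg_lt_zero]
  · rw [← Real.exp_nat_mul, mul_neg, mul_comm l]

lemma summable_succ_pow_mul_exp_neg_mul (hl : 0 < l) :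
    Summable fun k : ℕ => ((k : ℝ) + 1) ^ m * Real.exp (-(l * (k + 1))) := by
  exact_mod_cast (summable_nat_add_iff 1).2 (summable_pow_mul_exp_neg_mul m hl)

lemma exp_neg_mul_le_integral_pow_mul_exp_neg_mul (hl : 0 ≤ l) {a : ℝ} (ha : 0 ≤ a) :
    Real.exp (-l) * (a ^ m * Real.exp (-(l * a))) ≤
      ∫ x in a..a + 1, x ^ m * Real.exp (-(l * x)) := by
  have hconst := intervalIntegral.integral_const (a := a) (b := a + 1)
    (Real.exp (-l) * (a ^ m * Real.exp (-(l * a))))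
  rw [add_sub_cancel_left, one_smul] at hconst
  rw [← hconst]
  refine intervalIntegral.integral_mono_on (by linarith) (by simp)
    ((by fun_prop : Continuous _).intervalIntegrable _ _) fun x hx => ?_
  rw [mul_left_comm, ← Real.exp_add]
  have : -l + -(l * a) ≤ -(l * x) := by nlinarith [hx.2]
  have := pow_le_pow_left₀ ha hx.1 m
  have := pow_nonneg (ha.trans hx.1) m
  gcongr

lemma integral_pow_mul_exp_neg_mul_le (hl : 0 ≤ l) {a : ℝ} (ha : 0 ≤ a) :
    ∫ x in a..a + 1, x ^ m * Real.exp (-(l * x)) ≤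
      Real.exp l * ((a + 1) ^ m * Real.exp (-(l * (a + 1)))) := by
  have hconst := intervalIntegral.integral_const (a := a) (b := a + 1)
    (Real.exp l * ((a + 1) ^ m * Real.exp (-(l * (a + 1)))))
  rw [add_sub_cancel_left, one_smul] at hconst
  rw [← hconst]
  refine intervalIntegral.integral_mono_on (by linarith)
    ((by fun_prop : Continuous _).intervalIntegrable _ _) (by simp) fun x hx => ?_
  rw [mul_left_comm, ← Real.exp_add]
  have : -(l * x) ≤ l + -(l * (a + 1)) := by nlinarith [hx.1]
  have := ha.trans hx.1
  have := hx.2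
  gcongr

lemma le_tsum_pow_mul_exp_neg_mul (hl : 0 < l) :
    Real.exp (-l) * (m.factorial / l ^ (m + 1)) ≤
      ∑' k : ℕ, ((k : ℝ) + 1) ^ m * Real.exp (-(l * (k + 1))) := by
  rw [Real.exp_neg, inv_mul_le_iff₀ (Real.exp_pos l)]
  refine le_of_tendsto_of_tendsto' (tendsto_sum_integral_pow_mul_exp_neg_mul m hl)
    ((summable_succ_pow_mul_exp_neg_mul m hl).hasSum.mul_left _).tendsto_sum_nat fun N => ?_
  exact sum_le_sum fun k _ => integral_pow_mul_exp_neg_mul_le m hl.le k.cast_nonneg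

lemma tsum_pow_mul_exp_neg_mul_le (hl : 0 < l) :
    ∑' k : ℕ, ((k : ℝ) + 1) ^ m * Real.exp (-(l * (k + 1))) ≤
      Real.exp l * (m.factorial / l ^ (m + 1)) := by
  have hsummable := summable_pow_mul_exp_neg_mul m hl
  have hshift := hsummable.tsum_eq_zero_add
  push_cast at hshift
  calc ∑' k : ℕ, ((k : ℝ) + 1) ^ m * Real.exp (-(l * (k + 1)))
      ≤ ∑' k : ℕ, (k : ℝ) ^ m * Real.exp (-(l * k)) := by
        rw [hshift, le_add_iff_nonneg_left]
        positivity
    _ ≤ Real.exp l * (m.factorial / l ^ (m + 1)) := by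
        rw [← inv_mul_le_iff₀ (Real.exp_pos l), ← Real.exp_neg]
        refine le_of_tendsto_of_tendsto' (hsummable.hasSum.mul_left _).tendsto_sum_nat
          (tendsto_sum_integral_pow_mul_exp_neg_mul m hl) fun N => ?_
        exact sum_le_sum fun k _ =>
          exp_neg_mul_le_integral_pow_mul_exp_neg_mul m hl.le k.cast_nonneg

end PowMulExp

section LaplaceTransform

lemma hasSum_choose_sub_mul_pow {d n : ℕ} {t : ℝ} (ht : |t| < 1) (hd : d ≤ n) :
    HasSum (fun k : ℕ => ((k + 1 + n - d).choose (n + 1) : ℝ) * t ^ (k + 1))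
      (t ^ (d + 1) / (1 - t) ^ (n + 2)) := by
  have hzero : ∑ k ∈ range d, ((k + 1 + n - d).choose (n + 1) : ℝ) * t ^ (k + 1) = 0 := by
    refine sum_eq_zero fun k hk => ?_
    rw [Nat.choose_eq_zero_of_lt (by grind), Nat.cast_zero, zero_mul]
  have hgeom := (hasSum_choose_mul_geometric_of_norm_lt_one (n + 1) ht).mul_left (t ^ (d + 1))
  rw [mul_one_div] at hgeom
  rw [← hasSum_nat_add_iff' d, hzero, sub_zero]
  refine hgeom.congr_fun fun k => ?_
  rw [show k + d + 1 + n - d = k + (n + 1) by omega]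
  ring

lemma exp_neg_pow_div_one_sub_exp_neg_pow (l : ℝ) (d n : ℕ) :
    Real.exp (-l) ^ (d + 1) / (1 - Real.exp (-l)) ^ (n + 2) =
      Real.exp (-(l * (d - n / 2))) / (2 * Real.sinh (l / 2)) ^ (n + 2) := by
  have hsub : 1 - Real.exp (-l) = Real.exp (-(l / 2)) * (2 * Real.sinh (l / 2)) := by
    rw [Real.sinh_eq, mul_div_cancel₀ _ two_ne_zero, mul_sub, ← Real.exp_add, ← Real.exp_add,
      neg_add_cancel, Real.exp_zero, ← neg_add, add_halves]
  rw [hsub, mul_pow, ← div_div, ← Real.exp_nat_mul, ← Real.exp_nat_mul, ← Real.exp_sub]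
  push_cast
  ring_nf

variable {n : ℕ} {l : ℝ}

lemma le_sum_coeff_countingPoly_mul_tsum (n : ℕ) (hl : 0 < l) :
    Real.exp (-l) * (countingPoly n).coeff 0 * (n.factorial / l ^ (n + 1)) ≤
      ∑ j ∈ range (n + 1), (countingPoly n).coeff j *
        ∑' k : ℕ, ((k : ℝ) + 1) ^ (n - j) * Real.exp (-(l * (k + 1))) := by
  have hzero := mul_le_mul_of_nonneg_left (le_tsum_pow_mul_exp_neg_mul n hl)
    (coeff_zero_countingPoly_pos n).le
  rw [← mul_assoc, mul_comm _ (Real.exp (-l))] at hzero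
  refine hzero.trans (single_le_sum (f := fun j => (countingPoly n).coeff j *
    ∑' k : ℕ, ((k : ℝ) + 1) ^ (n - j) * Real.exp (-(l * (k + 1)))) (fun j _ => ?_)
    (mem_range.2 n.succ_pos))
  have := coeff_countingPoly_nonneg n j
  positivity

lemma sum_coeff_countingPoly_mul_tsum_le (n : ℕ) (hl : 0 < l) (hl' : l < 2) :
    ∑ j ∈ range (n + 1), (countingPoly n).coeff j *
        ∑' k : ℕ, ((k : ℝ) + 1) ^ (n - j) * Real.exp (-(l * (k + 1))) ≤
      Real.exp l / (1 - l / 2) * (countingPoly n).coeff 0 * (n.factorial / l ^ (n + 1)) := by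
  have hzero := (coeff_zero_countingPoly_pos n).le
  have hterm : ∀ j ∈ range (n + 1), (countingPoly n).coeff j *
      ∑' k : ℕ, ((k : ℝ) + 1) ^ (n - j) * Real.exp (-(l * (k + 1))) ≤
        Real.exp l * (countingPoly n).coeff 0 * (n.factorial / l ^ (n + 1)) * (l / 2) ^ j := by
    intro j hj
    have hj : j ≤ n := mem_range_succ_iff.1 hj
    refine (mul_le_mul (coeff_countingPoly_le n j) (tsum_pow_mul_exp_neg_mul_le (n - j) hl)
      (by positivity) (by positivity)).trans_eq ?_
    have hpow : l ^ (n + 1) = l ^ (n - j + 1) * l ^ j := by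
      rw [← pow_add]
      congr 1
      omega
    rw [← Nat.factorial_mul_descFactorial hj, hpow, div_pow]
    push_cast
    field_simp
  calc _ ≤ ∑ j ∈ range (n + 1), Real.exp l * (countingPoly n).coeff 0 *
          (n.factorial / l ^ (n + 1)) * (l / 2) ^ j := sum_le_sum hterm
    _ ≤ Real.exp l * (countingPoly n).coeff 0 * (n.factorial / l ^ (n + 1)) *
          (1 - l / 2)⁻¹ := by
        rw [← mul_sum]
        gcongr
        have hgeom := hasSum_geometric_of_lt_one (half_pos hl).le (by linarith : l / 2 < 1)
        exact sum_le_hasSum _ (fun j _ => by positivity) hgeom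
    _ = _ := by ring

variable {ι : Type*} {s : Finset ι} {D : ι → ℕ}

lemma factorial_mul_sum_exp_div_sinh_pow_eq (hl : 0 < l) (hD : ∀ i ∈ s, D i ≤ n)
    (hcount : ∀ r : ℕ, r ≠ 0 →
      (n + 1).factorial * ∑ i ∈ s, ((r + n - D i).choose (n + 1) : ℝ) =
        (countingPoly (n + 1)).eval (1 / (r : ℝ)) * r ^ (n + 1)) :
    (n + 1).factorial *
        ((∑ i ∈ s, Real.exp (-(l * (D i - n / 2)))) / (2 * Real.sinh (l / 2)) ^ (n + 2)) =
      ∑ j ∈ range (n + 2), (countingPoly (n + 1)).coeff j *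
        ∑' k : ℕ, ((k : ℝ) + 1) ^ (n + 1 - j) * Real.exp (-(l * (k + 1))) := by
  have hexp : |Real.exp (-l)| < 1 := by
    rwa [Real.abs_exp, Real.exp_lt_one_iff, neg_lt_zero]
  have hleft := (hasSum_sum fun i hi => hasSum_choose_sub_mul_pow hexp (hD i hi)).mul_left
    ((n + 1).factorial : ℝ)
  have hright := hasSum_sum fun j (_ : j ∈ range (n + 2)) =>
    (summable_succ_pow_mul_exp_neg_mul (n + 1 - j) hl).hasSum.mul_left
      ((countingPoly (n + 1)).coeff j)
  simp only [exp_neg_pow_div_one_sub_exp_neg_pow, ← sum_div] at hleft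
  refine hleft.unique (hright.congr_fun fun k => ?_)
  have hk : ((k + 1 : ℕ) : ℝ) ≠ 0 := Nat.cast_ne_zero.2 k.succ_ne_zero
  rw [← sum_mul, ← mul_assoc, hcount _ k.succ_ne_zero, eval_countingPoly_mul_pow_eq_sum _ hk,
    sum_mul, ← Real.exp_nat_mul]
  refine sum_congr rfl fun j _ => ?_
  push_cast
  ring_nf

/-- `(countingPoly (n + 1)).coeff 0` is the number of summands, and the `(n + 2)`-nd power is the
moment generating function of a sum of `n + 2` independent uniform variables on `[-1/2, 1/2]`. -/
theorem sum_exp_neg_mul_sub_half_mem_Icc (hl : 0 < l) (hl' : l < 2) (hD : ∀ i ∈ s, D i ≤ n)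
    (hcount : ∀ r : ℕ, r ≠ 0 →
      (n + 1).factorial * ∑ i ∈ s, ((r + n - D i).choose (n + 1) : ℝ) =
        (countingPoly (n + 1)).eval (1 / (r : ℝ)) * r ^ (n + 1)) :
    (∑ i ∈ s, Real.exp (-(l * (D i - n / 2)))) / (countingPoly (n + 1)).coeff 0 ∈
      Set.Icc (Real.exp (-l) * (2 * Real.sinh (l / 2) / l) ^ (n + 2))
        (Real.exp l / (1 - l / 2) * (2 * Real.sinh (l / 2) / l) ^ (n + 2)) := by
  have heq := factorial_mul_sum_exp_div_sinh_pow_eq hl hD hcount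
  have hlower := le_sum_coeff_countingPoly_mul_tsum (n + 1) hl
  have hupper := sum_coeff_countingPoly_mul_tsum_le (n + 1) hl hl'
  rw [← heq] at hlower hupper
  have hcoeff := coeff_zero_countingPoly_pos (n + 1)
  have : 0 < Real.sinh (l / 2) := Real.sinh_pos_iff.2 (half_pos hl)
  set c := (countingPoly (n + 1)).coeff 0
  set S := ∑ i ∈ s, Real.exp (-(l * (D i - n / 2)))
  set q := (2 * Real.sinh (l / 2)) ^ (n + 2) / ((n + 1).factorial * c)
  have hq : 0 ≤ q := by positivity
  have hS : S / c =
      (n + 1).factorial * (S / (2 * Real.sinh (l / 2)) ^ (n + 2)) * q := by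
    simp only [q]
    field_simp
  have hbound (b : ℝ) : b * (2 * Real.sinh (l / 2) / l) ^ (n + 2) =
      b * c * ((n + 1).factorial / l ^ (n + 1 + 1)) * q := by
    simp only [q, div_pow]
    field_simp
  rw [Set.mem_Icc, hS, hbound, hbound]
  exact ⟨mul_le_mul_of_nonneg_right hlower hq, mul_le_mul_of_nonneg_right hupper hq⟩

end LaplaceTransform

/-! ### Asymptotics of the Laplace transform -/

section LaplaceLimit

open Filter Topology

lemma abs_sinh_sub_le {x : ℝ} (hx : |x| ≤ 1) : |Real.sinh x - x - x ^ 3 / 6| ≤ |x| ^ 4 := by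
  have hpos := Real.exp_bound hx (n := 4) (by norm_num)
  have hneg := Real.exp_bound (x := -x) (by rwa [abs_neg]) (n := 4) (by norm_num)
  simp only [sum_range_succ, sum_range_zero, Nat.factorial, abs_neg] at hpos hneg
  norm_num at hpos hneg
  have h4 : 0 ≤ |x| ^ 4 := by positivity
  rw [abs_le] at hpos hneg ⊢
  rw [Real.sinh_eq]
  constructor <;> ring_nf at hpos hneg h4 ⊢ <;> linarith [hpos.1, hpos.2, hneg.1, hneg.2]

lemma abs_two_mul_sinh_half_div_sub_le {l : ℝ} (hl : l ≠ 0) (hl' : |l| ≤ 2) :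
    |2 * Real.sinh (l / 2) / l - 1 - l ^ 2 / 24| ≤ |l| ^ 3 := by
  have hsinh := abs_sinh_sub_le (x := l / 2) (by rw [abs_div, abs_two]; linarith)
  have heq : 2 * Real.sinh (l / 2) / l - 1 - l ^ 2 / 24 =
      2 * (Real.sinh (l / 2) - l / 2 - (l / 2) ^ 3 / 6) / l := by
    field_simp
    ring
  rw [heq, abs_div, abs_mul, abs_two, div_le_iff₀ (abs_pos.2 hl)]
  rw [abs_div, abs_two] at hsinh
  have : 0 ≤ |l| ^ 4 := by positivity
  linarith

variable {l : ℕ → ℝ} {c : ℝ}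

lemma tendsto_zero_of_tendsto_natCast_mul (h : Tendsto (fun n => n * l n) atTop (𝓝 c)) :
    Tendsto l atTop (𝓝 0) := by
  have hdiv := (tendsto_inv_atTop_nhds_zero_nat (𝕜 := ℝ)).mul h
  rw [zero_mul] at hdiv
  refine hdiv.congr' ?_
  filter_upwards [eventually_ne_atTop 0] with n hn
  rw [inv_mul_cancel_left₀ (Nat.cast_ne_zero.2 hn)]

lemma tendsto_zero_of_tendsto_natCast_mul_sq (h : Tendsto (fun n => n * l n ^ 2) atTop (𝓝 c)) :
    Tendsto l atTop (𝓝 0) := by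
  have hsqrt := (tendsto_zero_of_tendsto_natCast_mul h).sqrt
  simp only [Real.sqrt_sq_eq_abs, Real.sqrt_zero] at hsqrt
  exact (tendsto_zero_iff_abs_tendsto_zero l).2 hsqrt

theorem tendsto_two_mul_sinh_half_div_pow (hne : ∀ᶠ n in atTop, l n ≠ 0)
    (h : Tendsto (fun n => n * l n ^ 2) atTop (𝓝 c)) :
    Tendsto (fun n => (2 * Real.sinh (l n / 2) / l n) ^ (n + 2)) atTop
      (𝓝 (Real.exp (c / 24))) := by
  have hl := (tendsto_zero_of_tendsto_natCast_mul_sq h).abs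
  rw [abs_zero] at hl
  set u : ℕ → ℝ := fun n => 2 * Real.sinh (l n / 2) / l n
  have herror : Tendsto (fun n => n * (u n - 1 - l n ^ 2 / 24)) atTop (𝓝 0) := by
    have hcube := h.mul hl
    rw [mul_zero] at hcube
    refine squeeze_zero_norm' ?_ hcube
    filter_upwards [hne, hl.eventually_le_const two_pos] with n h0 h2
    rw [Real.norm_eq_abs, abs_mul, Nat.abs_cast]
    calc n * |u n - 1 - l n ^ 2 / 24| ≤ n * |l n| ^ 3 := by
          gcongr
          exact abs_two_mul_sinh_half_div_sub_le h0 h2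
      _ = n * l n ^ 2 * |l n| := by rw [← sq_abs]; ring
  have hlog : Tendsto (fun n => n * (u n - 1)) atTop (𝓝 (c / 24)) := by
    have hsum := herror.add (h.div_const 24)
    rw [zero_add] at hsum
    exact hsum.congr fun n => by ring
  have hone : Tendsto u atTop (𝓝 1) := by
    simpa only [sub_add_cancel, zero_add] using
      (tendsto_zero_of_tendsto_natCast_mul hlog).add_const 1
  have hprod := (Real.tendsto_one_add_pow_exp_of_tendsto hlog).mul (hone.pow 2)
  rw [one_pow, mul_one] at hprod
  refine hprod.congr fun n => ?_
  rw [add_sub_cancel, ← pow_add]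

theorem tendsto_sum_exp_neg_mul_sub_half {ι : ℕ → Type*} {s : ∀ n, Finset (ι n)}
    {D : ∀ n, ι n → ℕ} (hD : ∀ n, ∀ i ∈ s n, D n i ≤ n)
    (hcount : ∀ n r : ℕ, r ≠ 0 →
      (n + 1).factorial * ∑ i ∈ s n, ((r + n - D n i).choose (n + 1) : ℝ) =
        (countingPoly (n + 1)).eval (1 / (r : ℝ)) * r ^ (n + 1))
    (hpos : ∀ᶠ n in atTop, 0 < l n) (h : Tendsto (fun n => n * l n ^ 2) atTop (𝓝 c)) :
    Tendsto (fun n => (∑ i ∈ s n, Real.exp (-(l n * (D n i - n / 2)))) /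
      (countingPoly (n + 1)).coeff 0) atTop (𝓝 (Real.exp (c / 24))) := by
  have hl := tendsto_zero_of_tendsto_natCast_mul_sq h
  have hpow := tendsto_two_mul_sinh_half_div_pow (hpos.mono fun n hn => hn.ne') h
  have hlower := hl.neg.rexp.mul hpow
  have hupper := (hl.rexp.div ((hl.div_const 2).const_sub 1) (by norm_num)).mul hpow
  rw [neg_zero, Real.exp_zero, one_mul] at hlower
  rw [Real.exp_zero, zero_div, sub_zero, div_one, one_mul] at hupper
  have hmem := (hpos.and (hl.eventually_lt_const two_pos)).mono fun n hn =>
    sum_exp_neg_mul_sub_half_mem_Icc hn.1 hn.2 (hD n) (hcount n)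
  exact tendsto_of_tendsto_of_tendsto_of_le_of_le' hlower hupper
    (hmem.mono fun n hn => hn.1) (hmem.mono fun n hn => hn.2)

end LaplaceLimit

/-! ### Curtiss' theorem -/

section Curtiss

open Filter Topology MeasureTheory ProbabilityTheory

lemma integrable_and_integral_le_of_tendsto {Ω : Type*} [MeasurableSpace Ω] [TopologicalSpace Ω]
    [OpensMeasurableSpace Ω] [HasOuterApproxClosed Ω] {μs : ℕ → ProbabilityMeasure Ω}
    {μ : ProbabilityMeasure Ω} (hμ : Tendsto μs atTop (𝓝 μ)) {f : Ω → ℝ} (hf : Continuous f)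
    (hf0 : 0 ≤ f) (hint : ∀ n, Integrable f (μs n : Measure Ω)) {a : ℝ}
    (ha : Tendsto (fun n => ∫ ω, f ω ∂(μs n : Measure Ω)) atTop (𝓝 a)) :
    Integrable f (μ : Measure Ω) ∧ ∫ ω, f ω ∂(μ : Measure Ω) ≤ a := by
  have hae (ν : Measure Ω) : 0 ≤ᵐ[ν] f := .of_forall hf0
  have hmeas := hf.stronglyMeasurable.aestronglyMeasurable (μ := (μ : Measure Ω))
  have hfatou : ∫⁻ ω, ENNReal.ofReal (f ω) ∂(μ : Measure Ω) ≤ ENNReal.ofReal a := by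
    refine (lintegral_le_liminf_lintegral_of_forall_isOpen_measure_le_liminf_measure hf hf0
      fun G hG => ProbabilityMeasure.le_liminf_measure_open_of_tendsto hμ hG).trans_eq ?_
    simp only [← ofReal_integral_eq_lintegral_ofReal (hint _) (hae _)]
    exact (ENNReal.tendsto_ofReal ha).liminf_eq
  have ha0 : 0 ≤ a := ge_of_tendsto' ha fun n => integral_nonneg hf0
  refine ⟨?_, ?_⟩
  · rw [← lintegral_ofReal_ne_top_iff_integrable hmeas (hae _)]
    exact ne_top_of_le_ne_top ENNReal.ofReal_ne_top hfatou
  · rw [integral_eq_lintegral_of_nonneg_ae (hae _) hmeas]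
    exact ENNReal.toReal_le_of_le_ofReal ha0 hfatou

lemma integrable_and_integral_sub_sq_eq {Ω : Type*} [MeasurableSpace Ω] {μ : Measure Ω}
    [IsProbabilityMeasure μ] {f : Ω → ℝ} (hf : Integrable f μ)
    (hf2 : Integrable (fun ω => f ω ^ 2) μ) (c : ℝ) :
    Integrable (fun ω => (f ω - c) ^ 2) μ ∧
      ∫ ω, (f ω - c) ^ 2 ∂μ = ∫ ω, f ω ^ 2 ∂μ - 2 * c * ∫ ω, f ω ∂μ + c ^ 2 := by
  have hexpand : (fun ω => (f ω - c) ^ 2) = fun ω => f ω ^ 2 - 2 * c * f ω + c ^ 2 := by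
    ext ω; ring
  have hlin : Integrable (fun ω => 2 * c * f ω) μ := hf.const_mul _
  have hdiff : Integrable (fun ω => f ω ^ 2 - 2 * c * f ω) μ := hf2.sub hlin
  rw [hexpand]
  refine ⟨hdiff.add (integrable_const _), ?_⟩
  rw [integral_add hdiff (integrable_const _), integral_sub hf2 hlin,
    integral_const_mul, integral_const, probReal_univ, one_smul]

lemma eq_zero_of_forall_mul_le {a b : ℝ} (h : ∀ c, c * a ≤ b) : a = 0 := by
  by_contra ha
  have := h ((b + 1) / a)
  rw [div_mul_cancel₀ _ ha] at this
  linarith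

/-- Applying Fatou's lemma to `(f - c) ^ 2` for every `c` bounds a linear function of `c` from
above, which is therefore constant. -/
theorem integrable_and_integral_eq_of_tendsto {Ω : Type*} [MeasurableSpace Ω] [TopologicalSpace Ω]
    [OpensMeasurableSpace Ω] [HasOuterApproxClosed Ω] {μs : ℕ → ProbabilityMeasure Ω}
    {μ : ProbabilityMeasure Ω} (hμ : Tendsto μs atTop (𝓝 μ)) {f : Ω → ℝ} (hf : Continuous f)
    (hint : ∀ n, Integrable f (μs n : Measure Ω))
    (hint2 : ∀ n, Integrable (fun ω => f ω ^ 2) (μs n : Measure Ω)) {a b : ℝ}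
    (ha : Tendsto (fun n => ∫ ω, f ω ∂(μs n : Measure Ω)) atTop (𝓝 a))
    (hb : Tendsto (fun n => ∫ ω, f ω ^ 2 ∂(μs n : Measure Ω)) atTop (𝓝 b)) :
    Integrable f (μ : Measure Ω) ∧ ∫ ω, f ω ∂(μ : Measure Ω) = a := by
  obtain ⟨hsq, -⟩ := integrable_and_integral_le_of_tendsto hμ (hf.pow 2)
    (fun ω => sq_nonneg (f ω)) hint2 hb
  have hf1 : Integrable f (μ : Measure Ω) :=
    ((memLp_two_iff_integrable_sq hf.stronglyMeasurable.aestronglyMeasurable).2 hsq).integrable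
      one_le_two
  have hbound (c : ℝ) : c * (a - ∫ ω, f ω ∂(μ : Measure Ω)) ≤
      (b - ∫ ω, f ω ^ 2 ∂(μ : Measure Ω)) / 2 := by
    have hlim := (hb.sub (ha.const_mul (2 * c))).add_const (c ^ 2)
    obtain ⟨-, hle⟩ := integrable_and_integral_le_of_tendsto hμ (f := fun ω => (f ω - c) ^ 2)
      (by fun_prop) (fun ω => sq_nonneg _)
      (fun n => (integrable_and_integral_sub_sq_eq (hint n) (hint2 n) c).1)
      (hlim.congr fun n => (integrable_and_integral_sub_sq_eq (hint n) (hint2 n) c).2.symm)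
    rw [(integrable_and_integral_sub_sq_eq hf1 hsq c).2] at hle
    linarith
  exact ⟨hf1, (sub_eq_zero.1 (eq_zero_of_forall_mul_le hbound)).symm⟩

lemma integrable_exp_mul_of_integrableExpSet_eq_univ {μ : Measure ℝ}
    (h : integrableExpSet id μ = Set.univ) (t : ℝ) : Integrable (fun x => Real.exp (t * x)) μ :=
  Set.eq_univ_iff_forall.1 h t

lemma measureReal_lt_norm_le_exp_neg_mul {μ : Measure ℝ} [IsFiniteMeasure μ]
    (h : integrableExpSet id μ = Set.univ) (r : ℝ) :
    μ.real {x | r < ‖x‖} ≤ Real.exp (-r) * (mgf id μ 1 + mgf id μ (-1)) := by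
  have hsubset : {x : ℝ | r < ‖x‖} ⊆ {x | r ≤ id x} ∪ {x | id x ≤ -r} := fun x hx => by
    rcases lt_abs.1 (Set.mem_ofPred.1 hx) with h | h
    · exact .inl h.le
    · exact .inr (le_neg.2 h.le)
  have hupper := measure_ge_le_exp_mul_mgf (μ := μ) (X := id) r zero_le_one
    (integrable_exp_mul_of_integrableExpSet_eq_univ h 1)
  have hlower := measure_le_le_exp_mul_mgf (μ := μ) (X := id) (-r) (t := -1) (by norm_num)
    (integrable_exp_mul_of_integrableExpSet_eq_univ h (-1))
  rw [neg_neg, one_mul] at hlower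
  rw [neg_one_mul] at hupper
  linarith [(measureReal_mono (μ := μ) hsubset).trans (measureReal_union_le _ _)]

theorem isTightMeasureSet_of_mgf_le {S : Set (Measure ℝ)} {M : ℝ}
    (hfin : ∀ μ ∈ S, IsFiniteMeasure μ) (hint : ∀ μ ∈ S, integrableExpSet id μ = Set.univ)
    (hM : ∀ μ ∈ S, mgf id μ 1 + mgf id μ (-1) ≤ M) : IsTightMeasureSet S := by
  refine isTightMeasureSet_of_tendsto_measure_norm_gt ?_
  have hlim : Tendsto (fun r : ℝ => ENNReal.ofReal (Real.exp (-r) * M)) atTop (𝓝 0) := by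
    simpa using ENNReal.tendsto_ofReal (Real.tendsto_exp_neg_atTop_nhds_zero.mul_const M)
  refine tendsto_of_tendsto_of_tendsto_of_le_of_le tendsto_const_nhds hlim
    (fun _ => zero_le) fun r => iSup₂_le fun μ hμ => ?_
  have := hfin μ hμ
  rw [← ofReal_measureReal]
  exact ENNReal.ofReal_le_ofReal ((measureReal_lt_norm_le_exp_neg_mul (hint μ hμ) r).trans
    (mul_le_mul_of_nonneg_left (hM μ hμ) (Real.exp_pos _).le))

theorem eq_of_mgf_eq {μ ν : Measure ℝ} [IsProbabilityMeasure μ] [IsFiniteMeasure ν]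
    (hμ : integrableExpSet id μ = Set.univ) (h : mgf id μ = mgf id ν) : μ = ν := by
  refine Measure.ext_of_complexMGF_id_eq (funext fun z => eqOn_complexMGF_of_mgf h ?_)
  simp [hμ]

lemma integrableExpSet_eq_univ_and_mgf_eq_of_tendsto {μs : ℕ → ProbabilityMeasure ℝ}
    {μ : ProbabilityMeasure ℝ} (hμ : Tendsto μs atTop (𝓝 μ))
    (hint : ∀ n, integrableExpSet id (μs n : Measure ℝ) = Set.univ) {g : ℝ → ℝ}
    (hmgf : ∀ t, Tendsto (fun n => mgf id (μs n : Measure ℝ) t) atTop (𝓝 (g t))) :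
    integrableExpSet id (μ : Measure ℝ) = Set.univ ∧ mgf id (μ : Measure ℝ) = g := by
  have hsq (t x : ℝ) : Real.exp (2 * t * x) = Real.exp (t * x) ^ 2 := by
    rw [← Real.exp_nat_mul]; ring_nf
  have hexp (t : ℝ) : Integrable (fun x => Real.exp (t * x)) (μ : Measure ℝ) ∧
      mgf id (μ : Measure ℝ) t = g t :=
    integrable_and_integral_eq_of_tendsto hμ (by fun_prop)
      (fun n => integrable_exp_mul_of_integrableExpSet_eq_univ (hint n) t)
      (fun n => by
        simpa only [hsq] using integrable_exp_mul_of_integrableExpSet_eq_univ (hint n) (2 * t))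
      (hmgf t) (by simpa only [mgf, id, hsq] using hmgf (2 * t))
  exact ⟨Set.eq_univ_of_forall fun t => (hexp t).1, funext fun t => (hexp t).2⟩

theorem tendsto_of_tendsto_mgf {μs : ℕ → ProbabilityMeasure ℝ} {ν : ProbabilityMeasure ℝ}
    (hint : ∀ n, integrableExpSet id (μs n : Measure ℝ) = Set.univ)
    (hmgf : ∀ t, Tendsto (fun n => mgf id (μs n : Measure ℝ) t) atTop
      (𝓝 (mgf id (ν : Measure ℝ) t))) :
    Tendsto μs atTop (𝓝 ν) := by
  obtain ⟨M, hM⟩ := ((hmgf 1).add (hmgf (-1))).bddAbove_range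
  have htight : IsTightMeasureSet {x | ∃ μ ∈ Set.range μs, (μ : Measure ℝ) = x} := by
    refine isTightMeasureSet_of_mgf_le (M := M) ?_ ?_ ?_ <;> rintro _ ⟨_, ⟨n, rfl⟩, rfl⟩
    · infer_instance
    · exact hint n
    · exact hM ⟨n, rfl⟩
  refine tendsto_of_subseq_tendsto fun ns hns => ?_
  obtain ⟨μ, -, φ, hφ, hlim⟩ := (isCompact_closure_of_isTightMeasureSet htight).tendsto_subseq
    (x := fun k => μs (ns k)) fun k => subset_closure ⟨_, rfl⟩
  obtain ⟨hμint, hμmgf⟩ := integrableExpSet_eq_univ_and_mgf_eq_of_tendsto hlim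
    (fun k => hint _) fun t => (hmgf t).comp (hns.comp hφ.tendsto_atTop)
  have hμν : (μ : Measure ℝ) = ν := eq_of_mgf_eq hμint hμmgf
  exact ⟨φ, Subtype.ext hμν ▸ hlim⟩

lemma tendsto_measureReal_Iic {μs : ℕ → ProbabilityMeasure ℝ} {μ : ProbabilityMeasure ℝ}
    (h : Tendsto μs atTop (𝓝 μ)) {x : ℝ} (hx : (μ : Measure ℝ) {x} = 0) :
    Tendsto (fun n => (μs n : Measure ℝ).real (Set.Iic x)) atTop
      (𝓝 ((μ : Measure ℝ).real (Set.Iic x))) := by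
  have hfrontier : μ (frontier (Set.Iic x)) = 0 := by
    rwa [frontier_Iic, ProbabilityMeasure.null_iff_toMeasure_null]
  exact (NNReal.continuous_coe.tendsto _).comp
    (ProbabilityMeasure.tendsto_measure_of_null_frontier_of_tendsto h hfrontier)

end Curtiss

/-! ### The standardized number of descents -/

section StandardizedDescents

open Filter Topology MeasureTheory ProbabilityTheory

variable {ι : Type*} {s : Finset ι}

/-- The law of `f i` for `i` uniformly distributed in `s`; it is the zero measure when `s` is
empty. -/
noncomputable def uniformLaw (s : Finset ι) (f : ι → ℝ) : Measure ℝ :=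
  (#s : ENNReal)⁻¹ • ∑ i ∈ s, Measure.dirac (f i)

lemma isProbabilityMeasure_uniformLaw (hs : s.Nonempty) (f : ι → ℝ) :
    IsProbabilityMeasure (uniformLaw s f) := by
  refine ⟨?_⟩
  simp only [uniformLaw, Measure.smul_apply, Measure.coe_finsetSum, Finset.sum_apply,
    measure_univ, sum_const, nsmul_eq_mul, mul_one, smul_eq_mul]
  exact ENNReal.inv_mul_cancel (by simpa using hs.ne_empty) (by simp)

lemma integrable_uniformLaw (hs : s.Nonempty) (f : ι → ℝ) (g : ℝ → ℝ) :
    Integrable g (uniformLaw s f) := by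
  refine Integrable.smul_measure ?_ (by simp [hs.ne_empty])
  exact integrable_finsetSum_measure.2 fun i _ => integrable_dirac (by simp)

lemma integral_uniformLaw (s : Finset ι) (f : ι → ℝ) (g : ℝ → ℝ) :
    ∫ x, g x ∂(uniformLaw s f) = (∑ i ∈ s, g (f i)) / #s := by
  rw [uniformLaw, integral_smul_measure,
    integral_finsetSum_measure fun i _ => integrable_dirac (by simp)]
  simp only [integral_dirac, ENNReal.toReal_inv, ENNReal.toReal_natCast, smul_eq_mul]
  rw [inv_mul_eq_div]

lemma measureReal_uniformLaw_Iic (s : Finset ι) (f : ι → ℝ) (x : ℝ) :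
    (uniformLaw s f).real (Set.Iic x) = #{i ∈ s | f i ≤ x} / #s := by
  rw [← integral_indicator_one measurableSet_Iic, integral_uniformLaw, card_filter]
  push_cast
  simp only [Set.indicator_apply, Set.mem_Iic, Pi.one_apply]

lemma involutions_succ_nonempty (n : ℕ) : (involutions (n + 1)).Nonempty :=
  card_pos.1 (by exact_mod_cast card_involutions_pos n)

/-- The law of `(I_{n+1} - E[I_{n+1}]) / √Var(I_{n+1})`. -/
noncomputable def standardizedDescentsLaw (n : ℕ) : ProbabilityMeasure ℝ :=
  ⟨uniformLaw (involutions (n + 1)) fun π => (descents π - invMean (n + 1)) / √(invVar (n + 1)),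
    isProbabilityMeasure_uniformLaw (involutions_succ_nonempty n) _⟩

lemma measureReal_standardizedDescentsLaw_Iic (n : ℕ) (x : ℝ) :
    (standardizedDescentsLaw n : Measure ℝ).real (Set.Iic x) = invCDF (n + 1) x :=
  measureReal_uniformLaw_Iic _ _ _

lemma integrableExpSet_standardizedDescentsLaw (n : ℕ) :
    integrableExpSet id (standardizedDescentsLaw n : Measure ℝ) = Set.univ :=
  Set.eq_univ_of_forall fun _ => integrable_uniformLaw (involutions_succ_nonempty n) _ _

lemma mgf_standardizedDescentsLaw (n : ℕ) (t : ℝ) :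
    mgf id (standardizedDescentsLaw n : Measure ℝ) t =
      (∑ π ∈ involutions (n + 1), Real.exp (t / √(invVar (n + 1)) * (descents π - n / 2))) /
        (countingPoly (n + 1)).coeff 0 := by
  simp only [mgf, id, standardizedDescentsLaw, ProbabilityMeasure.coe_mk, integral_uniformLaw,
    invMean_succ, card_involutions_eq_coeff, mul_div_assoc', div_mul_eq_mul_div]

lemma tendsto_invVar_succ_div : Tendsto (fun n : ℕ => invVar (n + 1) / n) atTop (𝓝 (1 / 12)) := by
  have hlim (a : ℝ) : Tendsto (fun n : ℕ => 1 / 12 + a / (n : ℝ)) atTop (𝓝 (1 / 12)) := by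
    simpa only [add_zero] using
      (tendsto_const_div_atTop_nhds_zero_nat a).const_add (1 / 12 : ℝ)
  refine tendsto_of_tendsto_of_tendsto_of_le_of_le' (hlim (1 / 6)) (hlim (2 / 3)) ?_ ?_
  all_goals
    filter_upwards [eventually_gt_atTop 0] with n hn
    have hn' : (0 : ℝ) < n := Nat.cast_pos.2 hn
  · rw [le_div_iff₀ hn', add_mul, div_mul_cancel₀ _ hn'.ne']
    linarith [le_invVar_succ hn.ne']
  · rw [div_le_iff₀ hn', add_mul, div_mul_cancel₀ _ hn'.ne']
    linarith [invVar_succ_le hn.ne']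

lemma eventually_invVar_succ_pos : ∀ᶠ n : ℕ in atTop, 0 < invVar (n + 1) :=
  (eventually_ne_atTop 0).mono fun _ hn => lt_of_lt_of_le (by positivity) (le_invVar_succ hn)

lemma tendsto_natCast_mul_div_sqrt_invVar_sq (t : ℝ) :
    Tendsto (fun n : ℕ => n * (t / √(invVar (n + 1))) ^ 2) atTop (𝓝 (12 * t ^ 2)) := by
  have hlim := (tendsto_invVar_succ_div.inv₀ (by norm_num)).mul_const (t ^ 2)
  rw [one_div, inv_inv] at hlim
  refine hlim.congr' (eventually_invVar_succ_pos.mono fun n hn => ?_)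
  simp only [div_pow, Real.sq_sqrt hn.le, inv_div]
  ring

theorem tendsto_mgf_standardizedDescentsLaw (t : ℝ) :
    Tendsto (fun n => mgf id (standardizedDescentsLaw n : Measure ℝ) t) atTop
      (𝓝 (Real.exp (t ^ 2 / 2))) := by
  have hconst : t ^ 2 / 2 = 12 * t ^ 2 / 24 := by ring
  simp only [mgf_standardizedDescentsLaw, hconst]
  rcases lt_trichotomy t 0 with ht | rfl | ht
  · refine (tendsto_sum_exp_neg_mul_sub_half (l := fun n => -t / √(invVar (n + 1)))
      (fun n π _ => descents_le π) (fun n r hr => factorial_mul_sum_choose_descents hr n)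
      (eventually_invVar_succ_pos.mono fun n hn => div_pos (neg_pos.2 ht) (Real.sqrt_pos.2 hn))
      (by simpa using tendsto_natCast_mul_div_sqrt_invVar_sq (-t))).congr fun n => ?_
    simp only [neg_div, neg_mul, neg_neg]
  · simp [(coeff_zero_countingPoly_pos _).ne', card_involutions_eq_coeff]
  · refine (tendsto_sum_exp_neg_mul_sub_half (l := fun n => t / √(invVar (n + 1)))
      (D := fun n π => n - descents π) (fun n π _ => Nat.sub_le _ _)
      (fun n r hr => factorial_mul_sum_choose_sub_descents hr n)
      (eventually_invVar_succ_pos.mono fun n hn => div_pos ht (Real.sqrt_pos.2 hn))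
      (tendsto_natCast_mul_div_sqrt_invVar_sq t)).congr fun n => ?_
    congr 1
    refine sum_congr rfl fun π _ => ?_
    rw [Nat.cast_sub (descents_le π)]
    congr 1
    ring

/-- The standard normal distribution. -/
noncomputable def stdGaussianLaw : ProbabilityMeasure ℝ := ⟨gaussianReal 0 1, inferInstance⟩

lemma measureReal_stdGaussianLaw_Iic (x : ℝ) :
    (stdGaussianLaw : Measure ℝ).real (Set.Iic x) = stdNormalCDF x := by
  rw [measureReal_def, stdGaussianLaw, ProbabilityMeasure.coe_mk,
    gaussianReal_apply_eq_integral _ one_ne_zero,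
    ENNReal.toReal_ofReal (integral_nonneg fun y => gaussianPDFReal_nonneg _ _ _),
    stdNormalCDF, ← integral_const_mul]
  simp [gaussianPDFReal]

lemma mgf_stdGaussianLaw (t : ℝ) :
    mgf id (stdGaussianLaw : Measure ℝ) t = Real.exp (t ^ 2 / 2) := by
  simp [stdGaussianLaw, mgf_id_gaussianReal]

lemma stdGaussianLaw_singleton (x : ℝ) : (stdGaussianLaw : Measure ℝ) {x} = 0 :=
  (nullSingletonClass_gaussianReal one_ne_zero).measure_singleton x

theorem tendsto_standardizedDescentsLaw :
    Tendsto standardizedDescentsLaw atTop (𝓝 stdGaussianLaw) :=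
  tendsto_of_tendsto_mgf integrableExpSet_standardizedDescentsLaw fun t =>
    mgf_stdGaussianLaw t ▸ tendsto_mgf_standardizedDescentsLaw t

end StandardizedDescents

/-- The number of descents in random involutions is asymptotically normal. -/
theorem descents_involutions_asymptotically_normal (x : ℝ) :
    Filter.Tendsto (fun n : ℕ => invCDF n x) Filter.atTop (nhds (stdNormalCDF x)) := by
  have hcdf := tendsto_measureReal_Iic tendsto_standardizedDescentsLaw (stdGaussianLaw_singleton x)
  simp only [measureReal_standardizedDescentsLaw_Iic, measureReal_stdGaussianLaw_Iic] at hcdf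
  exact (Filter.tendsto_add_atTop_iff_nat 1).1 hcdf
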